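/- For the field K = ℚ(i, √5) one has M(K) = 5/16, so in particular K is norm-Euclidean. -/

import Mathlib

open NumberField

def IsNormEuclidean (K : Type*) [Field K] [NumberField K] : Prop :=
  ∀ ξ : K, ∃ η : 𝓞 K, |Algebra.norm ℚ (ξ - (η : K))| < 1

noncomputable def eucMin (K : Type*) [Field K] [NumberField K] : ℝ :=
  ⨆ ξ : K, ⨅ η : 𝓞 K, |((Algebra.norm ℚ (ξ - (η : K)) : ℚ) : ℝ)|

/-!
Let `k = ℚ(√5)` and `φ = (1 + √5) / 2`. The integers of `K` are `ℤ[i] + ℤ[i] φ`; write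
`ξ = A + B i` with `A, B ∈ k`. For `A` sufficiently close to `0`, a convexity estimate bounds the
norm by `5 / 16` once `B` is reduced modulo the integers of `k`. Translating `A` by an integer and
multiplying `ξ` by a power of the unit `φ` changes nothing, so `ξ` can only be at distance
`> 5 / 16` from the integers if no `φⁿ A` is close to an integer of `k`. In the coordinates
`A = a + c φ`, multiplication by `φ` is the Fibonacci map `(a, c) ↦ (c, a + c)` on the torus, and
the points whose whole orbit avoids the covered region `1 / 6 ≤ |c| ≤ 1 / 3` have a doubled orbit
that stays within `1 / 3` of `ℤ²`; the map is expansive, so `2 A` is an integer. By symmetry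
`2 B` is one as well, and of the sixteen remaining classes each contains a number of norm at most
`5 / 16`. The bound is attained at `ξ = (φ + i) / 2`, by a parity argument.
-/

section FibonacciMap

variable {F : Type*} [Field F] [LinearOrder F] [IsStrictOrderedRing F] [FloorRing F]

theorem round_add_of_abs_sub_round_lt {x y : F} (hx : |x - round x| < 1 / 3)
    (hy : |y - round y| < 1 / 3) (hxy : |x + y - round (x + y)| < 1 / 3) :
    round (x + y) = round x + round y := by
  have hlt : |((round (x + y) - (round x + round y) : ℤ) : F)| < 1 := by
    push_cast
    rw [abs_lt] at *
    constructor <;> linarith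
  exact sub_eq_zero.1 (Int.abs_lt_one_iff.1 (by exact_mod_cast hlt))

theorem eq_round_of_fibonacci_invariant {S : F → F → Prop} (hφ : ∀ x y, S y (x + y) ↔ S x y)
    (hS : ∀ x y, S x y → |x - round x| < 1 / 3) {x y : F} (hxy : S x y) : x = round x := by
  have back {x y : F} (h : S x y) : S (y - x) x := (hφ _ _).1 (by simpa using h)
  have forth {x y : F} (h : S x y) : S y (x + y) := (hφ x y).2 h
  have round_step {x y : F} (h : S x y) : round (x + y) = round x + round y :=
    round_add_of_abs_sub_round_lt (hS _ _ h) (hS _ _ (forth h)) (hS _ _ (forth (forth h)))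
  -- `F (n + 2) + F (n - 2) = 3 F n`, and rounding respects this, so the rounding error contracts.
  have decay (n : ℕ) : ∀ x y, S x y → |x - round x| ≤ 1 / 3 * (2 / 3) ^ n := by
    induction n with
    | zero => simpa using fun x y h => (hS x y h).le
    | succ n ih =>
      intro x y h
      have h₁ := ih _ _ (forth (forth h))
      have h₂ := ih _ _ (back (back h))
      have r₁ := round_step h
      have r₂ := round_step (back h)
      have r₃ := round_step (back (back h))
      rw [sub_add_cancel] at r₂ r₃
      rw [r₁] at h₁
      rw [show round (x - (y - x)) = 2 * round x - round y by omega] at h₂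
      push_cast at h₁ h₂
      rw [pow_succ]
      rw [abs_le] at *
      constructor <;> linarith
  by_contra hne
  obtain ⟨n, hn⟩ := exists_pow_lt_of_lt_one (abs_pos.2 (sub_ne_zero.2 hne))
    (show (2 / 3 : F) < 1 by norm_num)
  linarith [decay n x y hxy, pow_pos (show (0 : F) < 2 / 3 by norm_num) n]

end FibonacciMap

section NormForm

/-- The norm of `a + b i + (c + d i) φ`, where `φ` is the golden ratio: the squared absolute value
`X ^ 2 + Y ^ 2` of its relative norm `X + Y i` to `ℚ(i)`. -/
def normForm {R : Type*} [CommRing R] (a b c d : R) : R :=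
  (a ^ 2 - b ^ 2 + a * c - b * d - c ^ 2 + d ^ 2) ^ 2 + (2 * a * b + a * d + b * c - 2 * c * d) ^ 2

theorem intCast_normForm {R : Type*} [CommRing R] (a b c d : ℤ) :
    ((normForm a b c d : ℤ) : R) = normForm (a : R) b c d := by
  simp only [normForm]; push_cast; rfl

theorem normForm_div_two {F : Type*} [Field F] [CharZero F] (a b c d : F) :
    normForm (a / 2) (b / 2) (c / 2) (d / 2) = normForm a b c d / 16 := by
  simp only [normForm]; ring

theorem sixteen_mul_normForm {R : Type*} [CommRing R] (a b c d : R) :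
    16 * normForm a b c d = ((2 * a + c) ^ 2 - 5 * c ^ 2) ^ 2 + ((2 * b + d) ^ 2 - 5 * d ^ 2) ^ 2
      + 2 * ((2 * a + c) ^ 2 + 5 * c ^ 2) * ((2 * b + d) ^ 2 + 5 * d ^ 2)
      - 40 * ((2 * a + c) * c * ((2 * b + d) * d)) := by
  simp only [normForm]; ring

theorem normForm_of_left_eq_zero {R : Type*} [CommRing R] {a b c d : R}
    (h : a ^ 2 - b ^ 2 + a * c - b * d - c ^ 2 + d ^ 2 = 0) :
    normForm a b c d = 4 * (a ^ 2 + a * c - c ^ 2) ^ 2 + 5 * (a * d - b * c) ^ 2 := by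
  simp only [normForm]
  linear_combination
    (a ^ 2 - b ^ 2 + a * c - b * d - c ^ 2 + d ^ 2 - 4 * (a ^ 2 + a * c - c ^ 2)) * h

theorem five_le_normForm_of_parity {a b c d : ℤ} (ha : Even a) (hb : Odd b) (hc : Odd c)
    (hd : Even d) : 5 ≤ normForm a b c d := by
  have one_le_sq {z : ℤ} (hz : Odd z) : 1 ≤ z ^ 2 :=
    Int.add_one_le_of_lt (sq_pos_of_ne_zero (by rintro rfl; simp at hz))
  rw [← Int.not_even_iff_odd] at hb hc
  rcases eq_or_ne (a ^ 2 - b ^ 2 + a * c - b * d - c ^ 2 + d ^ 2) 0 with h | h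
  · have hdet : Odd (a * d - b * c) := by simp [ha, hb, hc, parity_simps]
    rw [normForm_of_left_eq_zero h]
    linarith [one_le_sq hdet, sq_nonneg (a ^ 2 + a * c - c ^ 2)]
  · have hre : Even (a ^ 2 - b ^ 2 + a * c - b * d - c ^ 2 + d ^ 2) := by
      simp [ha, hd, hb, hc, parity_simps]
    have him : Odd (2 * a * b + a * d + b * c - 2 * c * d) := by
      simp [ha, hd, hb, hc, parity_simps, mul_assoc]
    obtain ⟨k, hk⟩ := even_iff_two_dvd.1 hre
    have hk0 : 1 ≤ k ^ 2 :=
      Int.add_one_le_of_lt (sq_pos_of_ne_zero (by rintro rfl; exact h hk))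
    rw [normForm, hk]
    linarith [one_le_sq him]

theorem le_normForm_half_sub_intCast {F : Type*} [Field F] [LinearOrder F] [IsStrictOrderedRing F]
    (k l m n : ℤ) : 5 / 16 ≤ normForm (0 - k : F) (1 / 2 - l) (1 / 2 - m) (0 - n) := by
  calc (5 / 16 : F)
    _ ≤ ((normForm (-(2 * k)) (1 - 2 * l) (1 - 2 * m) (-(2 * n)) : ℤ) : F) / 16 := by
      gcongr
      exact_mod_cast five_le_normForm_of_parity (by simp) (by simp [parity_simps])
        (by simp [parity_simps]) (by simp)
    _ = normForm (0 - k : F) (1 / 2 - l) (1 / 2 - m) (0 - n) := by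
      rw [intCast_normForm, ← normForm_div_two]; push_cast; congr 1 <;> ring

end NormForm

section Fibre

variable {F : Type*} [Field F] [LinearOrder F]

/-- The number with coordinates `a, b, c, d` has norm at most `5 / 16` modulo integral
coordinates. -/
def IsNear (a b c d : F) : Prop :=
  ∃ k l m n : ℤ, normForm (a - k) (b - l) (c - m) (d - n) ≤ 5 / 16

/-- Every number `A + B i` with `A = a + c φ` fixed and `B = b + d φ` arbitrary is within norm
`5 / 16` of an integer. -/
def FibreCovered (a c : F) : Prop := ∀ b d, IsNear a b c d

theorem IsNear.swap {a b c d : F} : IsNear a b c d → IsNear b a d c := by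
  rintro ⟨k, l, m, n, h⟩
  refine ⟨l, k, n, m, le_of_eq_of_le ?_ h⟩
  simp only [normForm]; ring

theorem IsNear.neg {a b c d : F} : IsNear a b c d → IsNear (-a) (-b) (-c) (-d) := by
  rintro ⟨k, l, m, n, h⟩
  refine ⟨-k, -l, -m, -n, le_of_eq_of_le ?_ h⟩
  simp only [normForm]; push_cast; ring

theorem IsNear.conj {a b c d : F} :
    IsNear a b c d → IsNear (a + c) (b + d) (-c) (-d) := by
  rintro ⟨k, l, m, n, h⟩
  refine ⟨k + m, l + n, -m, -n, le_of_eq_of_le ?_ h⟩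
  simp only [normForm]; push_cast; ring

theorem isNear_mul_phi {a b c d : F} : IsNear c d (a + c) (b + d) ↔ IsNear a b c d := by
  constructor <;> rintro ⟨k, l, m, n, h⟩
  · refine ⟨m - k, n - l, k, l, le_of_eq_of_le ?_ h⟩
    simp only [normForm]; push_cast; ring
  · refine ⟨m, n, k + m, l + n, le_of_eq_of_le ?_ h⟩
    simp only [normForm]; push_cast; ring

theorem isNear_sub_intCast {a b c d : F} (k m : ℤ) :
    IsNear (a - k) b (c - m) d ↔ IsNear a b c d := by
  constructor <;> rintro ⟨k', l, m', n, h⟩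
  · refine ⟨k + k', l, m + m', n, le_of_eq_of_le ?_ h⟩
    simp only [normForm]; push_cast; ring
  · refine ⟨k' - k, l, m' - m, n, le_of_eq_of_le ?_ h⟩
    simp only [normForm]; push_cast; ring

theorem fibreCovered_mul_phi {a c : F} : FibreCovered c (a + c) ↔ FibreCovered a c := by
  refine ⟨fun h b d => isNear_mul_phi.1 (h d (b + d)), fun h b d => ?_⟩
  simpa using isNear_mul_phi.2 (h (d - b) b)

theorem fibreCovered_sub_intCast {a c : F} (k m : ℤ) :
    FibreCovered (a - k) (c - m) ↔ FibreCovered a c :=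
  forall₂_congr fun _ _ => isNear_sub_intCast k m

theorem FibreCovered.neg {a c : F} (h : FibreCovered a c) : FibreCovered (-a) (-c) := fun b d => by
  simpa using (h (-b) (-d)).neg

theorem FibreCovered.conj {a c : F} (h : FibreCovered a c) : FibreCovered (a + c) (-c) :=
  fun b d => by simpa using (h (b + d) (-d)).conj

theorem FibreCovered.of_div_phi {a c : F} (h : FibreCovered (c - a) a) : FibreCovered a c := by
  simpa using fibreCovered_mul_phi.2 h

end Fibre

section Covering

variable {F : Type*} [Field F] [LinearOrder F] [IsStrictOrderedRing F]

-- `9 / 4` is a rational upper bound for `√5`.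
theorem cross_terms_le (s c t d : F) :
    2 * (s ^ 2 + 5 * c ^ 2) * (t ^ 2 + 5 * d ^ 2) - 40 * (s * c * (t * d)) ≤
      2 * (|s| + 9 / 4 * |c|) ^ 2 * (t ^ 2 + 5 * d ^ 2) := by
  have htd : 40 * (|t| * |d|) ≤ 9 * (t ^ 2 + 5 * d ^ 2) := by
    rw [← sq_abs t, ← sq_abs d]
    nlinarith [sq_nonneg (20 * |d| - 9 * |t|), sq_nonneg |t|]
  have hsc : 2 * (s ^ 2 + 5 * c ^ 2) + 9 * (|s| * |c|) ≤ 2 * (|s| + 9 / 4 * |c|) ^ 2 := by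
    rw [← sq_abs s, ← sq_abs c]
    nlinarith [sq_nonneg |c|]
  calc 2 * (s ^ 2 + 5 * c ^ 2) * (t ^ 2 + 5 * d ^ 2) - 40 * (s * c * (t * d))
    _ ≤ 2 * (s ^ 2 + 5 * c ^ 2) * (t ^ 2 + 5 * d ^ 2) + |s| * |c| * (40 * (|t| * |d|)) := by
      rw [sub_eq_add_neg, add_le_add_iff_left]
      exact (neg_le_abs _).trans_eq (by simp only [abs_mul, Nat.abs_ofNat]; ring)
    _ ≤ 2 * (s ^ 2 + 5 * c ^ 2) * (t ^ 2 + 5 * d ^ 2)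
          + |s| * |c| * (9 * (t ^ 2 + 5 * d ^ 2)) := by gcongr
    _ = (2 * (s ^ 2 + 5 * c ^ 2) + 9 * (|s| * |c|)) * (t ^ 2 + 5 * d ^ 2) := by ring
    _ ≤ _ := by gcongr

-- The left side is convex in `(x, y)`, and `(1, 5 / 4)` is its worst corner.
theorem sq_sub_add_le_corner {x y m : F} (hx : 0 ≤ x) (hx1 : x ≤ 1) (hy : 0 ≤ y) (hy1 : y ≤ 5 / 4)
    (hm : 3 / 4 ≤ m) : (x - y) ^ 2 + 2 * m * (x + y) ≤ 1 / 16 + 9 / 2 * m := by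
  nlinarith [mul_nonneg hx hy]

-- `79 / 16` is what the corner `(|2 b + d|, |d|) = (1, 1 / 2)` leaves: `16 * (5 / 16) - 1 / 16`.
theorem normForm_le_of_sq_add_sq_le {a b c d : F}
    (hac : ((2 * a + c) ^ 2 - 5 * c ^ 2) ^ 2 + 9 / 2 * (|2 * a + c| + 9 / 4 * |c|) ^ 2 ≤ 79 / 16)
    (hb : |2 * b + d| ≤ 1) (hd : |d| ≤ 1 / 2) : normForm a b c d ≤ 5 / 16 := by
  have h16 := sixteen_mul_normForm a b c d
  have hcross := cross_terms_le (2 * a + c) c (2 * b + d) d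
  set s := 2 * a + c
  set t := 2 * b + d
  set m := (|s| + 9 / 4 * |c|) ^ 2 with hm
  have ht1 : t ^ 2 ≤ 1 := by rw [← sq_abs]; exact pow_le_one₀ (abs_nonneg t) hb
  have hd1 : 5 * d ^ 2 ≤ 5 / 4 := by rw [← sq_abs]; nlinarith [abs_nonneg d]
  have hcorner {M : F} (hM : 3 / 4 ≤ M) := sq_sub_add_le_corner (sq_nonneg t) ht1
    (show 0 ≤ 5 * d ^ 2 by positivity) hd1 hM
  rcases le_total (3 / 4) m with h | h
  · linarith [hcorner h]
  · have hs : s ^ 2 ≤ m := by rw [← sq_abs, hm]; gcongr; linarith [abs_nonneg c]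
    have hc : 5 * c ^ 2 ≤ m := by
      rw [← sq_abs, hm]; nlinarith [mul_nonneg (abs_nonneg s) (abs_nonneg c)]
    have hsc : (s ^ 2 - 5 * c ^ 2) ^ 2 ≤ (3 / 4) ^ 2 :=
      sq_le_sq' (by linarith [sq_nonneg s]) (by linarith [sq_nonneg c])
    have hmono : 2 * m * (t ^ 2 + 5 * d ^ 2) ≤ 2 * (3 / 4) * (t ^ 2 + 5 * d ^ 2) := by gcongr
    linarith [hcorner le_rfl]

variable [FloorRing F]

theorem fibreCovered_of_sq_add_sq_le {a c : F}
    (h : ((2 * a + c) ^ 2 - 5 * c ^ 2) ^ 2 + 9 / 2 * (|2 * a + c| + 9 / 4 * |c|) ^ 2 ≤ 79 / 16) :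
    FibreCovered a c := by
  intro b d
  set e := d - round d
  have hb := abs_sub_round (b + e / 2)
  refine ⟨0, round (b + e / 2), 0, round d,
    normForm_le_of_sq_add_sq_le (by simpa using h) ?_ (abs_sub_round d)⟩
  rw [abs_le] at hb ⊢
  constructor <;> linarith

theorem fibreCovered_of_abs_le {a c : F} (h : |2 * a + c| + 9 / 4 * |c| ≤ 19 / 20) :
    FibreCovered a c := by
  have hs := abs_nonneg (2 * a + c)
  have hc := abs_nonneg c
  apply fibreCovered_of_sq_add_sq_le
  have h₁ : (2 * a + c) ^ 2 ≤ 361 / 400 := by rw [← sq_abs]; nlinarith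
  have h₂ : 5 * c ^ 2 ≤ 361 / 400 := by rw [← sq_abs]; nlinarith
  have h₃ : ((2 * a + c) ^ 2 - 5 * c ^ 2) ^ 2 ≤ (361 / 400) ^ 2 :=
    sq_le_sq' (by linarith [sq_nonneg (2 * a + c)]) (by linarith [sq_nonneg c])
  nlinarith

-- Around `(2 a + c, c) = (1, 0.277)` the linear criterion `fibreCovered_of_abs_le` fails for every
-- `φⁿ A`. The bound on `(2 a + c) ^ 2 - 5 c ^ 2` is the tangent of `1 - 5 c ^ 2` at `c = 0.277`.
theorem fibreCovered_of_mem_triangle {a c : F} (hs : 2 * a + c ≤ 1)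
    (h₁ : 19 / 5 < 5 / 2 * (2 * a + c) + 11 / 2 * c)
    (h₂ : 19 / 5 < 21 / 2 * (2 * a + c) - 47 / 2 * c) : FibreCovered a c := by
  have hD : ((2 * a + c) ^ 2 - 5 * c ^ 2) ^ 2 ≤ (173 / 125 - 277 / 100 * c) ^ 2 :=
    sq_le_sq' (by nlinarith) (by nlinarith [sq_nonneg (c - 277 / 1000)])
  rcases le_total c (277 / 1000) with hc | hc
  · have hf : (|2 * (c - a) + a| + 9 / 4 * |a|) ^ 2 ≤ ((11 * c + 5) / 8) ^ 2 := by
      rw [abs_of_nonneg (by linarith), abs_of_nonneg (by linarith)]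
      gcongr <;> linarith
    refine .of_div_phi (fibreCovered_of_sq_add_sq_le ?_)
    calc ((2 * (c - a) + a) ^ 2 - 5 * a ^ 2) ^ 2 + 9 / 2 * (|2 * (c - a) + a| + 9 / 4 * |a|) ^ 2
      _ = ((2 * a + c) ^ 2 - 5 * c ^ 2) ^ 2
          + 9 / 2 * (|2 * (c - a) + a| + 9 / 4 * |a|) ^ 2 := by ring
      _ ≤ (173 / 125 - 277 / 100 * c) ^ 2 + 9 / 2 * ((11 * c + 5) / 8) ^ 2 := by gcongr
      _ ≤ 79 / 16 := by nlinarith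
  · have hf : (|2 * (a - (c - a)) + (c - a)| + 9 / 4 * |c - a|) ^ 2 ≤ 1 := by
      rw [abs_of_nonneg (by linarith), abs_of_nonpos (by linarith)]
      apply pow_le_one₀ <;> linarith
    refine .of_div_phi <| .of_div_phi <| fibreCovered_of_sq_add_sq_le ?_
    calc ((2 * (a - (c - a)) + (c - a)) ^ 2 - 5 * (c - a) ^ 2) ^ 2
          + 9 / 2 * (|2 * (a - (c - a)) + (c - a)| + 9 / 4 * |c - a|) ^ 2
      _ = ((2 * a + c) ^ 2 - 5 * c ^ 2) ^ 2
          + 9 / 2 * (|2 * (a - (c - a)) + (c - a)| + 9 / 4 * |c - a|) ^ 2 := by ring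
      _ ≤ (173 / 125 - 277 / 100 * c) ^ 2 + 9 / 2 * 1 := by gcongr
      _ ≤ 79 / 16 := by nlinarith

-- Except in the triangle above, one of `A`, `φ⁻¹ A`, `φ⁻² A` and `φ ^ 3 A - (1 + φ)` is small
-- enough for `fibreCovered_of_abs_le`.
theorem fibreCovered_of_mem_Icc {a c : F} (hc : c ∈ Set.Icc (1 / 6) (1 / 3))
    (hs : 2 * a + c ∈ Set.Icc 0 1) : FibreCovered a c := by
  obtain ⟨hc₀, hc₁⟩ := hc
  obtain ⟨hs₀, hs₁⟩ := hs
  rcases le_or_gt (2 * a + c + 9 / 4 * c) (19 / 20) with h₀ | h₀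
  · refine fibreCovered_of_abs_le ?_
    rwa [abs_of_nonneg hs₀, abs_of_nonneg (by linarith)]
  rcases le_or_gt (13 / 2 * (2 * a + c) - 29 / 2 * c) (19 / 5) with h₁ | h₁
  · rcases le_or_gt (5 / 2 * (2 * a + c) + 11 / 2 * c) (19 / 5) with h₂ | h₂
    · refine .of_div_phi (fibreCovered_of_abs_le ?_)
      cases abs_cases (2 * (c - a) + a) <;> cases abs_cases a <;> linarith
    rcases le_or_gt (21 / 2 * (2 * a + c) - 47 / 2 * c) (19 / 5) with h₃ | h₃
    · refine .of_div_phi <| .of_div_phi <| fibreCovered_of_abs_le ?_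
      cases abs_cases (2 * (a - (c - a)) + (c - a)) <;> cases abs_cases (c - a) <;> linarith
    · exact fibreCovered_of_mem_triangle hs₁ h₂ h₃
  · rw [← fibreCovered_mul_phi, ← fibreCovered_mul_phi, ← fibreCovered_mul_phi,
      ← fibreCovered_sub_intCast 1 1]
    refine fibreCovered_of_abs_le ?_
    push_cast
    rw [abs_of_nonpos (by linarith), abs_of_nonneg (by linarith)]
    linarith

theorem fibreCovered_of_abs_mem_Icc {a c : F}
    (hc : |c| ∈ Set.Icc (1 / 6) (1 / 3)) : FibreCovered a c := by
  wlog hc₀ : 0 ≤ c generalizing a c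
  · simpa using (this (a := -a) (c := -c) (by rwa [abs_neg]) (by linarith)).neg
  rw [abs_of_nonneg hc₀] at hc
  set k := round (a + c / 2) with hk
  have hround := abs_le.1 (abs_sub_round (a + c / 2))
  rw [← hk] at hround
  rw [← fibreCovered_sub_intCast k 0, Int.cast_zero, sub_zero]
  rcases le_total 0 (2 * (a - k) + c) with h | h
  · exact fibreCovered_of_mem_Icc hc ⟨h, by linarith⟩
  · have := (fibreCovered_of_mem_Icc (a := -(a - k + c)) hc ⟨by linarith, by linarith⟩).conj.neg
    simpa using this

theorem abs_two_mul_sub_round_lt {x : F}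
    (hx : |x - round x| ∉ Set.Icc (1 / 6) (1 / 3)) : |2 * x - round (2 * x)| < 1 / 3 := by
  have hhalf := abs_sub_round x
  suffices ∃ n : ℤ, |2 * x - n| < 1 / 3 from
    this.elim fun n hn => (round_le (2 * x) n).trans_lt hn
  have hx' : |x - round x| < 1 / 6 ∨ 1 / 3 < |x - round x| := by
    simpa only [Set.mem_Icc, not_and_or, not_le] using hx
  rcases hx' with h | h
  · exact ⟨2 * round x, by push_cast; rw [abs_lt] at *; constructor <;> linarith⟩
  rcases lt_abs.1 h with h | h
  · exact ⟨2 * round x + 1, by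
      push_cast; rw [abs_le] at hhalf; rw [abs_lt]; constructor <;> linarith⟩
  · exact ⟨2 * round x - 1, by
      push_cast; rw [abs_le] at hhalf; rw [abs_lt]; constructor <;> linarith⟩

theorem two_mul_eq_round_of_not_fibreCovered {a c : F} (h : ¬FibreCovered a c) :
    2 * a = round (2 * a) := by
  refine eq_round_of_fibonacci_invariant (S := fun x y => ¬FibreCovered (x / 2) (y / 2))
    (fun x y => by rw [add_div, fibreCovered_mul_phi]) (fun x y hxy => ?_) (y := 2 * c)
    (by simpa only [mul_div_cancel_left₀ _ (two_ne_zero' F)] using h)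
  rw [← mul_div_cancel₀ x (two_ne_zero' F)]
  refine abs_two_mul_sub_round_lt fun hx => hxy (.of_div_phi ?_)
  rw [← fibreCovered_sub_intCast 0 (round (x / 2))]
  exact fibreCovered_of_abs_mem_Icc hx

theorem exists_two_mul_eq_intCast_of_not_fibreCovered {a c : F}
    (h : ¬FibreCovered a c) : ∃ m n : ℤ, 2 * a = m ∧ 2 * c = n :=
  ⟨_, _, two_mul_eq_round_of_not_fibreCovered h,
    two_mul_eq_round_of_not_fibreCovered (fibreCovered_mul_phi.not.2 h)⟩

theorem exists_normForm_sub_two_mul_le (a b c d : ℤ) : ∃ k l m n : ℤ,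
    normForm (a - 2 * k) (b - 2 * l) (c - 2 * m) (d - 2 * n) ≤ 5 := by
  have bits : ∀ a b c d : Fin 2, ∃ k l m n : Fin 2,
      normForm ((a : ℤ) - 2 * k) (b - 2 * l) (c - 2 * m) (d - 2 * n) ≤ 5 := by
    unfold normForm
    decide
  have hbit (z : ℤ) : ∃ (q : ℤ) (r : Fin 2), z = 2 * q + r :=
    ⟨z / 2, ⟨(z % 2).toNat, by omega⟩, by simp only; omega⟩
  obtain ⟨a', ra, rfl⟩ := hbit a
  obtain ⟨b', rb, rfl⟩ := hbit b
  obtain ⟨c', rc, rfl⟩ := hbit c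
  obtain ⟨d', rd, rfl⟩ := hbit d
  obtain ⟨k, l, m, n, h⟩ := bits ra rb rc rd
  refine ⟨a' + k, b' + l, c' + m, d' + n, ?_⟩
  convert h using 2 <;> ring

theorem isNear_intCast_div_two (a b c d : ℤ) :
    IsNear (a / 2 : F) (b / 2) (c / 2) (d / 2) := by
  obtain ⟨k, l, m, n, h⟩ := exists_normForm_sub_two_mul_le a b c d
  refine ⟨k, l, m, n, ?_⟩
  calc normForm ((a : F) / 2 - k) (b / 2 - l) (c / 2 - m) (d / 2 - n)
    _ = ((normForm (a - 2 * k) (b - 2 * l) (c - 2 * m) (d - 2 * n) : ℤ) : F) / 16 := by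
      rw [intCast_normForm, ← normForm_div_two]; push_cast; congr 1 <;> ring
    _ ≤ 5 / 16 := by gcongr; exact_mod_cast h

theorem isNear_all (a b c d : F) : IsNear a b c d := by
  by_contra h
  obtain ⟨m, n, hm, hn⟩ := exists_two_mul_eq_intCast_of_not_fibreCovered
    (a := a) (c := c) fun hac => h (hac b d)
  obtain ⟨p, q, hp, hq⟩ := exists_two_mul_eq_intCast_of_not_fibreCovered
    (a := b) (c := d) fun hbd => h (hbd a c).swap
  have half {x : F} {k : ℤ} (hx : 2 * x = k) : x = k / 2 := by rw [← hx]; ring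
  rw [half hm, half hn, half hp, half hq] at h
  exact h (isNear_intCast_div_two m p n q)

end Covering

theorem exists_eq_intCast_of_squarefree_mul_sq {D k : ℤ} (hD : Squarefree D) {q : ℚ}
    (h : D * q ^ 2 = k) : ∃ n : ℤ, q = n := by
  have hden : D * q.num ^ 2 = k * (q.den * q.den) := by
    have hq : (q.den : ℚ) ≠ 0 := by exact_mod_cast q.den_ne_zero
    rw [← q.num_div_den] at h
    field_simp at h
    rw [← pow_two, mul_comm k]
    exact_mod_cast h
  have hcop : IsCoprime ((q.den : ℤ) * q.den) (q.num ^ 2) := by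
    have := q.isCoprime_num_den.symm
    exact (this.mul_left this).pow_right
  have hunit : IsUnit (q.den : ℤ) :=
    hD _ (hcop.dvd_of_dvd_mul_right (hden ▸ dvd_mul_left _ _))
  exact ⟨q.num, (Rat.coe_int_num_of_den_eq_one (Int.ofNat_isUnit.1 hunit |> Nat.isUnit_iff.1)).symm⟩

theorem even_of_sum_sq_eq_four_mul {m n p q e f : ℤ} (h₁ : m ^ 2 + p ^ 2 + n ^ 2 + q ^ 2 = 4 * e)
    (h₂ : 2 * (m * n + p * q) + n ^ 2 + q ^ 2 = 4 * f) :
    Even m ∧ Even n ∧ Even p ∧ Even q := by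
  have key : ∀ m n p q : ZMod 4, m ^ 2 + p ^ 2 + n ^ 2 + q ^ 2 = 0 →
      2 * (m * n + p * q) + n ^ 2 + q ^ 2 = 0 → 2 * m = 0 ∧ 2 * n = 0 ∧ 2 * p = 0 ∧ 2 * q = 0 := by
    decide
  have hfour (z : ℤ) : ((4 * z : ℤ) : ZMod 4) = 0 :=
    (ZMod.intCast_zmod_eq_zero_iff_dvd _ 4).2 ⟨z, rfl⟩
  have heven (z : ℤ) (hz : 2 * (z : ZMod 4) = 0) : Even z := by
    have : (4 : ℤ) ∣ 2 * z := (ZMod.intCast_zmod_eq_zero_iff_dvd _ 4).1 (by exact_mod_cast hz)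
    rw [even_iff_two_dvd]; omega
  obtain ⟨hm, hn, hp, hq⟩ := key m n p q (by rw [← hfour e, ← h₁]; push_cast; rfl)
    (by rw [← hfour f, ← h₂]; push_cast; rfl)
  exact ⟨heven m hm, heven n hn, heven p hp, heven q hq⟩

section Integrality

variable {R : Type*} [CommRing R] {i φ : R}

theorem isIntegral_of_sq_eq_neg_one (hi : i ^ 2 = -1) : IsIntegral ℤ i :=
  .of_pow two_pos (hi ▸ isIntegral_one.neg)

theorem isIntegral_of_sq_eq_add_one (hφ : φ ^ 2 = φ + 1) : IsIntegral ℤ φ := by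
  refine ⟨.X ^ 2 - .X - 1, by monicity!, ?_⟩
  simp only [Polynomial.eval₂_sub, Polynomial.eval₂_pow, Polynomial.eval₂_X, Polynomial.eval₂_one]
  linear_combination hφ

end Integrality

section Field

variable {K : Type*} [Field K] {i φ : K}

/-- The number with coordinates `a, b, c, d` in the integral basis `1, i, φ, i φ`. -/
def ofCoords (i φ : K) (a b c d : ℚ) : K := a + b * i + (c + d * i) * φ

theorem isIntegral_ofCoords_intCast (hi : i ^ 2 = -1) (hφ : φ ^ 2 = φ + 1) (k l m n : ℤ) :
    IsIntegral ℤ (ofCoords i φ k l m n) := by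
  have hint (z : ℤ) : IsIntegral ℤ ((z : ℚ) : K) := by
    rw [Rat.cast_intCast]
    exact isIntegral_algebraMap (x := z)
  have hI := isIntegral_of_sq_eq_neg_one hi
  exact ((hint k).add ((hint l).mul hI)).add
    (((hint m).add ((hint n).mul hI)).mul (isIntegral_of_sq_eq_add_one hφ))

variable [CharZero K]

theorem exists_eq_intCast_of_isIntegral_ratCast {r : ℚ} (h : IsIntegral ℤ (r : K)) :
    ∃ m : ℤ, r = m := by
  rw [← eq_ratCast (algebraMap ℚ K), isIntegral_algebraMap_iff (algebraMap ℚ K).injective,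
    IsIntegrallyClosed.isIntegral_iff] at h
  exact h.imp fun m hm => by simpa using hm.symm

theorem eq_zero_of_add_mul_phi_eq_zero (hφ : φ ^ 2 = φ + 1) {a c : ℚ}
    (h : (a : K) + c * φ = 0) : a = 0 ∧ c = 0 := by
  have hsq : (2 * a + c) ^ 2 = 5 * c ^ 2 := by
    have : (2 * (a : K) + c) ^ 2 = 5 * (c : K) ^ 2 := by
      linear_combination 4 * (c : K) ^ 2 * hφ + 4 * ((a : K) + c - c * φ) * h
    exact_mod_cast this
  have hc : c = 0 := by
    by_contra hc
    refine (show ¬IsSquare (5 : ℚ) by norm_num) ⟨(2 * a + c) / c, ?_⟩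
    field_simp
    exact hsq.symm
  subst hc
  exact ⟨by simpa using h, rfl⟩

theorem ofCoords_sub (a b c d a' b' c' d' : ℚ) :
    ofCoords i φ a b c d - ofCoords i φ a' b' c' d' =
      ofCoords i φ (a - a') (b - b') (c - c') (d - d') := by
  simp only [ofCoords]; push_cast; ring

theorem ofCoords_mul (hi : i ^ 2 = -1) (hφ : φ ^ 2 = φ + 1) (a b c d a' b' c' d' : ℚ) :
    ofCoords i φ a b c d * ofCoords i φ a' b' c' d' =
      ofCoords i φ (a * a' - b * b' + c * c' - d * d') (a * b' + b * a' + c * d' + d * c')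
        (a * c' + c * a' - b * d' - d * b' + c * c' - d * d')
        (a * d' + d * a' + b * c' + c * b' + c * d' + d * c') := by
  simp only [ofCoords]; push_cast
  linear_combination ((b : K) + d * φ) * (b' + d' * φ) * hi
    + ((c : K) * c' - d * d' + (c * d' + d * c') * i) * hφ

theorem eq_zero_of_ofCoords_eq_zero (hi : i ^ 2 = -1) (hφ : φ ^ 2 = φ + 1) {a b c d : ℚ}
    (h : ofCoords i φ a b c d = 0) : a = 0 ∧ b = 0 ∧ c = 0 ∧ d = 0 := by
  have hmul : ((a ^ 2 + b ^ 2 + c ^ 2 + d ^ 2 : ℚ) : K)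
      + ((2 * (a * c + b * d) + c ^ 2 + d ^ 2 : ℚ) : K) * φ = 0 := by
    have := ofCoords_mul hi hφ a b c d a (-b) c (-d)
    rw [h, zero_mul] at this
    rw [this]
    simp only [ofCoords]; push_cast; ring
  have hsum := (eq_zero_of_add_mul_phi_eq_zero hφ hmul).1
  refine ⟨?_, ?_, ?_, ?_⟩ <;>
    exact (pow_eq_zero_iff two_ne_zero).1 (by
      linarith [sq_nonneg a, sq_nonneg b, sq_nonneg c, sq_nonneg d])

theorem linearIndependent_one_i_phi (hi : i ^ 2 = -1) (hφ : φ ^ 2 = φ + 1) :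
    LinearIndependent ℚ ![1, i, φ, i * φ] := by
  rw [Fintype.linearIndependent_iff]
  intro g hg
  obtain ⟨h₀, h₁, h₂, h₃⟩ := eq_zero_of_ofCoords_eq_zero hi hφ (a := g 0) (b := g 1) (c := g 2)
    (d := g 3) (by
      rw [← hg, ofCoords]
      simp only [Fin.sum_univ_four, Rat.smul_def, Matrix.cons_val]
      ring)
  exact Fin.forall_fin_succ.2 ⟨h₀, Fin.forall_fin_succ.2 ⟨h₁, Fin.forall_fin_two.2 ⟨h₂, h₃⟩⟩⟩

/-- The basis `1, i, φ, i φ` of `K` over `ℚ`. -/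
noncomputable def coordBasis (hi : i ^ 2 = -1) (hφ : φ ^ 2 = φ + 1)
    (h4 : Module.finrank ℚ K = 4) : Module.Basis (Fin 4) ℚ K :=
  basisOfLinearIndependentOfCardEqFinrank (linearIndependent_one_i_phi hi hφ) (by simp [h4])

section Degree

variable (hi : i ^ 2 = -1) (hφ : φ ^ 2 = φ + 1) (h4 : Module.finrank ℚ K = 4)

theorem sum_smul_coordBasis (v : Fin 4 → ℚ) :
    ∑ j, v j • coordBasis hi hφ h4 j = ofCoords i φ (v 0) (v 1) (v 2) (v 3) := by
  simp only [Fin.sum_univ_four, coordBasis, coe_basisOfLinearIndependentOfCardEqFinrank,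
    Rat.smul_def, Matrix.cons_val, ofCoords]
  ring

theorem coordBasis_repr_ofCoords (a b c d : ℚ) :
    (coordBasis hi hφ h4).repr (ofCoords i φ a b c d) = ![a, b, c, d] := by
  rw [← (coordBasis hi hφ h4).repr_sum_self ![a, b, c, d], sum_smul_coordBasis]
  rfl

include hi hφ h4

theorem exists_eq_ofCoords (ξ : K) : ∃ a b c d : ℚ, ξ = ofCoords i φ a b c d :=
  ⟨_, _, _, _, by rw [← sum_smul_coordBasis hi hφ h4, Module.Basis.sum_repr]⟩

theorem norm_ofCoords (a b c d : ℚ) :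
    Algebra.norm ℚ (ofCoords i φ a b c d) = normForm a b c d := by
  have hbasis (j : Fin 4) : coordBasis hi hφ h4 j = ofCoords i φ (if 0 = j then 1 else 0)
      (if 1 = j then 1 else 0) (if 2 = j then 1 else 0) (if 3 = j then 1 else 0) := by
    rw [← sum_smul_coordBasis hi hφ h4 fun k => if k = j then 1 else 0]
    simp
  have hmatrix : Algebra.leftMulMatrix (coordBasis hi hφ h4) (ofCoords i φ a b c d) =
      !![a, -b, c, -d; b, a, d, c; c, -d, a + c, -b - d; d, c, b + d, a + c] := by
    ext j k
    rw [Algebra.leftMulMatrix_eq_repr_mul, hbasis, ofCoords_mul hi hφ, coordBasis_repr_ofCoords]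
    fin_cases k <;> fin_cases j <;> simp
  rw [Algebra.norm_eq_matrix_det (coordBasis hi hφ h4), hmatrix]
  simp [Matrix.det_succ_row_zero, Fin.sum_univ_succ, Fin.succAbove, normForm]
  ring

theorem exists_algHom_ofCoords {i' φ' : K} (hi' : i' ^ 2 = -1) (hφ' : φ' ^ 2 = φ' + 1) :
    ∃ f : K →ₐ[ℚ] K, ∀ a b c d, f (ofCoords i φ a b c d) = ofCoords i' φ' a b c d := by
  set f : K →ₗ[ℚ] K := (coordBasis hi hφ h4).constr ℚ (coordBasis hi' hφ' h4)
  have hf (a b c d : ℚ) : f (ofCoords i φ a b c d) = ofCoords i' φ' a b c d := by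
    calc f (ofCoords i φ a b c d) = f (∑ j, ![a, b, c, d] j • coordBasis hi hφ h4 j) := by
          rw [sum_smul_coordBasis]; rfl
      _ = ∑ j, ![a, b, c, d] j • coordBasis hi' hφ' h4 j := by
          simp only [map_sum, map_smul, f, Module.Basis.constr_basis]
      _ = ofCoords i' φ' a b c d := sum_smul_coordBasis hi' hφ' h4 _
  refine ⟨AlgHom.ofLinearMap f (by simpa [ofCoords] using hf 1 0 0 0) fun x y => ?_, hf⟩
  obtain ⟨a, b, c, d, rfl⟩ := exists_eq_ofCoords hi hφ h4 x
  obtain ⟨a', b', c', d', rfl⟩ := exists_eq_ofCoords hi hφ h4 y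
  rw [ofCoords_mul hi hφ, hf, hf, hf, ofCoords_mul hi' hφ']

theorem isIntegral_ofCoords_conj {i' φ' : K} (hi' : i' ^ 2 = -1) (hφ' : φ' ^ 2 = φ' + 1)
    {a b c d : ℚ} (h : IsIntegral ℤ (ofCoords i φ a b c d)) :
    IsIntegral ℤ (ofCoords i' φ' a b c d) := by
  obtain ⟨f, hf⟩ := exists_algHom_ofCoords hi hφ h4 hi' hφ'
  exact hf a b c d ▸ h.map (f.restrictScalars ℤ)

theorem exists_eq_intCast_of_isIntegral_add_mul_phi {a c : ℚ}
    (h : IsIntegral ℤ ((a : K) + c * φ)) : ∃ m n : ℤ, a = m ∧ c = n := by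
  have hconj : IsIntegral ℤ ((a : K) + c * (1 - φ)) := by
    have := isIntegral_ofCoords_conj hi hφ h4 hi (φ' := 1 - φ) (by linear_combination hφ)
      (a := a) (b := 0) (c := c) (d := 0) (by simpa [ofCoords] using h)
    simpa [ofCoords] using this
  obtain ⟨t, ht⟩ : ∃ t : ℤ, 2 * a + c = t := by
    refine exists_eq_intCast_of_isIntegral_ratCast (K := K) ?_
    rw [show ((2 * a + c : ℚ) : K) = (a + c * φ) + (a + c * (1 - φ)) by push_cast; ring]
    exact h.add hconj
  obtain ⟨u, hu⟩ : ∃ u : ℤ, a ^ 2 + a * c - c ^ 2 = u := by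
    refine exists_eq_intCast_of_isIntegral_ratCast (K := K) ?_
    rw [show ((a ^ 2 + a * c - c ^ 2 : ℚ) : K) = (a + c * φ) * (a + c * (1 - φ)) by
      push_cast; linear_combination (c : K) ^ 2 * hφ]
    exact h.mul hconj
  obtain ⟨n, rfl⟩ : ∃ n : ℤ, c = n :=
    exists_eq_intCast_of_squarefree_mul_sq (D := 5) (k := t ^ 2 - 4 * u)
      (show Prime (5 : ℤ) by norm_num).squarefree
      (by push_cast; rw [← ht, ← hu]; ring)
  obtain ⟨m, rfl⟩ : ∃ m : ℤ, a = m := by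
    refine exists_eq_intCast_of_isIntegral_ratCast (K := K) ?_
    have hn : IsIntegral ℤ (n : K) := isIntegral_algebraMap (x := n)
    rw [show (a : K) = (a + (n : ℚ) * φ) - n * φ by push_cast; ring]
    exact h.sub (hn.mul (isIntegral_of_sq_eq_add_one hφ))
  exact ⟨m, n, rfl, rfl⟩

theorem exists_eq_intCast_of_isIntegral_ofCoords {a b c d : ℚ}
    (h : IsIntegral ℤ (ofCoords i φ a b c d)) :
    ∃ k l m n : ℤ, a = k ∧ b = l ∧ c = m ∧ d = n := by
  have hconj : IsIntegral ℤ (ofCoords (-i) φ a b c d) :=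
    isIntegral_ofCoords_conj hi hφ h4 (by rw [neg_sq, hi]) hφ h
  have htrace : ((2 * a : ℚ) : K) + (2 * c : ℚ) * φ =
      ofCoords i φ a b c d + ofCoords (-i) φ a b c d := by
    simp only [ofCoords]; push_cast; ring
  have hdiff : ((2 * b : ℚ) : K) + (2 * d : ℚ) * φ =
      (ofCoords (-i) φ a b c d - ofCoords i φ a b c d) * i := by
    simp only [ofCoords]; push_cast; linear_combination 2 * ((b : K) + d * φ) * hi
  have hnorm : ((a ^ 2 + b ^ 2 + c ^ 2 + d ^ 2 : ℚ) : K)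
      + (2 * (a * c + b * d) + c ^ 2 + d ^ 2 : ℚ) * φ =
      ofCoords i φ a b c d * ofCoords (-i) φ a b c d := by
    simp only [ofCoords]; push_cast
    linear_combination ((b : K) + d * φ) ^ 2 * hi - ((c : K) ^ 2 + (d : K) ^ 2) * hφ
  obtain ⟨m, n, hm, hn⟩ := exists_eq_intCast_of_isIntegral_add_mul_phi hi hφ h4
    (htrace ▸ h.add hconj)
  obtain ⟨p, q, hp, hq⟩ := exists_eq_intCast_of_isIntegral_add_mul_phi hi hφ h4
    (hdiff ▸ (hconj.sub h).mul (isIntegral_of_sq_eq_neg_one hi))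
  obtain ⟨e, f, he, hf⟩ := exists_eq_intCast_of_isIntegral_add_mul_phi hi hφ h4
    (hnorm ▸ h.mul hconj)
  obtain ⟨⟨m, rfl⟩, ⟨n, rfl⟩, ⟨p, rfl⟩, ⟨q, rfl⟩⟩ :=
    even_of_sum_sq_eq_four_mul (m := m) (n := n) (p := p) (q := q) (e := e) (f := f)
      (by qify; rw [← hm, ← hn, ← hp, ← hq, ← he]; ring)
      (by qify; rw [← hm, ← hn, ← hp, ← hq, ← hf]; ring)
  push_cast at hm hn hp hq
  exact ⟨m, p, n, q, by linarith, by linarith, by linarith, by linarith⟩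

theorem exists_norm_sub_le (ξ : K) : ∃ η : 𝓞 K, |Algebra.norm ℚ (ξ - (η : K))| ≤ 5 / 16 := by
  obtain ⟨a, b, c, d, rfl⟩ := exists_eq_ofCoords hi hφ h4 ξ
  obtain ⟨k, l, m, n, h⟩ := isNear_all a b c d
  refine ⟨⟨_, isIntegral_ofCoords_intCast hi hφ k l m n⟩, ?_⟩
  change |Algebra.norm ℚ (ofCoords i φ a b c d - ofCoords i φ k l m n)| ≤ 5 / 16
  rw [ofCoords_sub, norm_ofCoords hi hφ h4,
    abs_of_nonneg (by unfold normForm; positivity)]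
  exact h

theorem le_norm_half_sub (η : 𝓞 K) :
    5 / 16 ≤ |Algebra.norm ℚ (ofCoords i φ 0 (1 / 2) (1 / 2) 0 - (η : K))| := by
  obtain ⟨a, b, c, d, hη⟩ := exists_eq_ofCoords hi hφ h4 (η : K)
  have hint : IsIntegral ℤ (ofCoords i φ a b c d) := by
    rw [← hη]
    exact RingOfIntegers.isIntegral_coe η
  obtain ⟨k, l, m, n, rfl, rfl, rfl, rfl⟩ :=
    exists_eq_intCast_of_isIntegral_ofCoords hi hφ h4 hint
  rw [hη, ofCoords_sub, norm_ofCoords hi hφ h4]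
  exact (le_normForm_half_sub_intCast k l m n).trans (le_abs_self _)

end Degree

end Field

theorem eucMin_eq_ratCast {K : Type*} [Field K] [NumberField K] {r : ℚ}
    (hle : ∀ ξ : K, ∃ η : 𝓞 K, |Algebra.norm ℚ (ξ - (η : K))| ≤ r)
    (hge : ∃ ξ : K, ∀ η : 𝓞 K, r ≤ |Algebra.norm ℚ (ξ - (η : K))|) : eucMin K = r := by
  have hinf (ξ : K) : (⨅ η : 𝓞 K, |((Algebra.norm ℚ (ξ - (η : K)) : ℚ) : ℝ)|) ≤ r := by
    obtain ⟨η, hη⟩ := hle ξ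
    refine ciInf_le_of_le ⟨0, Set.forall_mem_range.2 fun _ => abs_nonneg _⟩ η ?_
    exact_mod_cast hη
  obtain ⟨ξ, hξ⟩ := hge
  refine le_antisymm (ciSup_le hinf)
    (le_ciSup_of_le ⟨r, Set.forall_mem_range.2 hinf⟩ ξ (le_ciInf fun η => ?_))
  exact_mod_cast hξ η

/-- For `K = ℚ(i, √5)` the Euclidean minimum equals `5/16`; in particular
`K` is norm-Euclidean. -/
theorem eucMin_gaussian_sqrt5
    {K : Type*} [Field K] [NumberField K]
    (i : K) (hi : i ^ 2 = -1) (s : K) (hs : s ^ 2 = 5)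
    (h4 : Module.finrank ℚ K = 4) :
    eucMin K = 5 / 16 ∧ IsNormEuclidean K := by
  have hφ : ((1 + s) / 2) ^ 2 = (1 + s) / 2 + 1 := by linear_combination hs / 4
  have hle := exists_norm_sub_le hi hφ h4
  constructor
  · have := eucMin_eq_ratCast hle ⟨_, le_norm_half_sub hi hφ h4⟩
    simpa using this
  · exact fun ξ => (hle ξ).imp fun η hη => hη.trans_lt (by norm_num)
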